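/- arXiv:2504.12927 — 2 statements merged into one kernel-verified Lean document; each statement's English description precedes it below -/
import Mathlib

section
/- Linear momentum loss along hyperboloidal evolution (analytic form of Theorem 5.2). Let Q : S² → ℝ be continuous. Let T, S : ℝ³∖{0} → Sym₃(ℝ) (symmetric 3×3 real matrices) be C² maps that are positively homogeneous of degree 0 and satisfy T(x)x = 0, tr T(x) = 0, S(x)x = 0, tr S(x) = 0 for all x ≠ 0. Define vector fields P, G : ℝ³∖{0} → ℝ³ by P_k = Σ_j ∂_j T_{jk} and G_k = Σ_j ∂_j S_{jk}. Let Φ : (0,∞) × S² → ℝ be continuous with Φ(r,ω) = r⁻² [ −4 Q(ω) + 2 (div P)(ω) + (div G)(ω) ] + O(r⁻³) uniformly in ω as r → ∞, where div denotes the Euclidean divergence on ℝ³. Then for every vector e ∈ ℝ³, lim_{r→∞} ∫_{S²} r² Φ(r,ω) ⟨ω, e⟩ dA(ω) = −4 ∫_{S²} Q(ω) ⟨ω, e⟩ dA(ω). -/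
open MeasureTheory Filter Real RealInnerProductSpace Matrix

noncomputable section

/-- Euclidean 3-space. -/
abbrev E3 := EuclideanSpace ℝ (Fin 3)

/-- The unit sphere `S²` in Euclidean `ℝ³`. -/
abbrev S2 := Metric.sphere (0 : E3) 1

/-- The surface (Riemannian area) measure on `S²`, with total area `4π`. -/
noncomputable def sphereMeasure : Measure S2 := Measure.toSphere (volume : Measure E3)

/-- The Euclidean row divergence of a matrix field: `P_k = ∑ j ∂_j T_{jk}`. -/
noncomputable def rowDiv (T : E3 → Matrix (Fin 3) (Fin 3) ℝ) (x : E3) (k : Fin 3) : ℝ :=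
  ∑ j : Fin 3, fderiv ℝ (fun y : E3 => T y j k) x (EuclideanSpace.single j 1)

/-- The Euclidean divergence of the row divergence: `div P = ∑ k ∂_k P_k`. -/
noncomputable def divRowDiv (T : E3 → Matrix (Fin 3) (Fin 3) ℝ) (x : E3) : ℝ :=
  ∑ k : Fin 3, fderiv ℝ (fun y : E3 => rowDiv T y k) x (EuclideanSpace.single k 1)
/-!
Let `P` be the row divergence of a symmetric trace-free field `T` with `T(x)x = 0`. Taking the
divergence of `T(x)x = 0` gives `⟪x, P⟫ = -tr T = 0`, so `P` is tangential, while for a constant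
vector `e` the tangential field `T(x)e` has divergence `⟪P, e⟫`. A tangential field has divergence
of mean zero over the sphere: smear it out radially to a compactly supported field on the whole
space, integrate that by parts, and separate the variables in polar coordinates. Hence
`∫ ⟪ω, e⟫ div P = -∫ ⟪P, e⟫ = -∫ div (T e) = 0`, and only `-4 Q` survives in the uniform limit of
`r² Φ`.
-/

section Divergence

variable {E : Type*} [NormedAddCommGroup E] [NormedSpace ℝ E]

/-- The divergence of a vector field, defined without coordinates as the trace of its derivative
so that it makes sense on any finite-dimensional space. It is `0` at points where the field is not
differentiable. -/
def divergence (V : E → E) (x : E) : ℝ := LinearMap.trace ℝ E (fderiv ℝ V x)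

lemma divergence_euclidean_eq_sum {ι : Type*} [Fintype ι] [DecidableEq ι]
    {V : EuclideanSpace ℝ ι → EuclideanSpace ℝ ι} {x : EuclideanSpace ℝ ι}
    (hV : DifferentiableAt ℝ V x) :
    divergence V x = ∑ k, fderiv ℝ (fun y => V y k) x (EuclideanSpace.single k 1) := by
  rw [divergence, LinearMap.trace_eq_sum_inner _ (EuclideanSpace.basisFun ι ℝ)]
  refine Finset.sum_congr rfl fun k _ => ?_
  have hk := ((EuclideanSpace.proj k : EuclideanSpace ℝ ι →L[ℝ] ℝ).hasFDerivAt.comp x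
    hV.hasFDerivAt).fderiv
  rw [EuclideanSpace.basisFun_inner, EuclideanSpace.basisFun_apply]
  exact (congrArg (· (EuclideanSpace.single k 1)) hk).symm

variable [FiniteDimensional ℝ E] {U : Set E} {V : E → E} {x : E}

lemma divergence_smul {f : E → ℝ} (hf : DifferentiableAt ℝ f x) (hV : DifferentiableAt ℝ V x) :
    divergence (fun y => f y • V y) x = f x * divergence V x + fderiv ℝ f x (V x) := by
  simp only [divergence, fderiv_fun_smul hf hV, ContinuousLinearMap.toLinearMap_add,
    ContinuousLinearMap.toLinearMap_smul, map_add, map_smul, smul_eq_mul]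
  congr 1
  exact LinearMap.trace_smulRight _ _

/-- The trace of a continuous endomorphism, as a continuous functional, for commuting the
divergence with limits and integrals. -/
def traceCLM (E : Type*) [NormedAddCommGroup E] [NormedSpace ℝ E] [FiniteDimensional ℝ E] :
    (E →L[ℝ] E) →L[ℝ] ℝ :=
  LinearMap.toContinuousLinearMap (LinearMap.trace ℝ E ∘ₗ ContinuousLinearMap.coeLM ℝ)

lemma divergence_eq_traceCLM : divergence V = fun x => traceCLM E (fderiv ℝ V x) := rfl

lemma continuousOn_divergence (hU : IsOpen U) (hV : ContDiffOn ℝ 1 V U) :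
    ContinuousOn (divergence V) U := by
  rw [divergence_eq_traceCLM]
  exact (traceCLM E).continuous.comp_continuousOn (hV.continuousOn_fderiv_of_isOpen hU le_rfl)

variable [MeasurableSpace E] [BorelSpace E] {μ : Measure E} [μ.IsAddHaarMeasure]

lemma integral_fderiv_eq_zero {F : Type*} [NormedAddCommGroup F] [NormedSpace ℝ F] {W : E → F}
    (hW : ContDiff ℝ 1 W) (hW_supp : HasCompactSupport W) : ∫ x, fderiv ℝ W x ∂μ = 0 := by
  have hD : Integrable (fderiv ℝ W) μ :=
    (hW.continuous_fderiv one_ne_zero).integrable_of_hasCompactSupport (hW_supp.fderiv ℝ)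
  ext v
  have hparts := integral_smul_fderiv_eq_neg_fderiv_smul_of_integrable (μ := μ)
    (f := fun _ => (1 : ℝ)) (g := W) (v := v) (by simp)
    (by simpa using hD.apply_continuousLinearMap v)
    (by simpa using hW.continuous.integrable_of_hasCompactSupport hW_supp)
    (fun _ _ => differentiableAt_const _) fun x _ => hW.differentiable one_ne_zero x
  simpa [ContinuousLinearMap.integral_apply hD] using hparts

lemma integral_divergence_eq_zero {W : E → E} (hW : ContDiff ℝ 1 W)
    (hW_supp : HasCompactSupport W) : ∫ x, divergence W x ∂μ = 0 := by
  have hD : Integrable (fderiv ℝ W) μ :=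
    (hW.continuous_fderiv one_ne_zero).integrable_of_hasCompactSupport (hW_supp.fderiv ℝ)
  rw [divergence_eq_traceCLM, (traceCLM E).integral_comp_comm hD,
    integral_fderiv_eq_zero hW hW_supp, map_zero]

end Divergence

section Polar

variable {E : Type*} [NormedAddCommGroup E] [NormedSpace ℝ E] [FiniteDimensional ℝ E]
  [Nontrivial E] [MeasurableSpace E] [BorelSpace E] (μ : Measure E) [μ.IsAddHaarMeasure]

lemma integral_volumeIoiPow (n : ℕ) (a : ℝ → ℝ) :
    ∫ r : Set.Ioi (0 : ℝ), a r ∂Measure.volumeIoiPow n = ∫ r in Set.Ioi (0 : ℝ), r ^ n * a r := by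
  have hmeas : Measurable fun r : Set.Ioi (0 : ℝ) => ENNReal.ofReal (r.1 ^ n) := by fun_prop
  rw [Measure.volumeIoiPow,
    integral_withDensity_eq_integral_toReal_smul hmeas (by simp),
    ← integral_subtype_comap measurableSet_Ioi fun r : ℝ => r ^ n * a r]
  refine integral_congr_ae (.of_forall fun r => ?_)
  simp [ENNReal.toReal_ofReal (pow_nonneg r.2.out.le n)]

lemma integral_norm_mul_normalize (a : ℝ → ℝ) (g : E → ℝ) :
    ∫ x, a ‖x‖ * g (NormedSpace.normalize x) ∂μ =
      (∫ ω : Metric.sphere (0 : E) 1, g ω ∂μ.toSphere) *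
        ∫ r in Set.Ioi (0 : ℝ), r ^ (Module.finrank ℝ E - 1) * a r := by
  have hpolar := μ.measurePreserving_homeomorphUnitSphereProd.integral_comp
    (Homeomorph.measurableEmbedding _)
    fun p : Metric.sphere (0 : E) 1 × Set.Ioi (0 : ℝ) => g p.1 * a p.2
  calc ∫ x, a ‖x‖ * g (NormedSpace.normalize x) ∂μ
      = ∫ x : ({0}ᶜ : Set E), a ‖x.1‖ * g (NormedSpace.normalize x.1) ∂μ.comap (↑) := by
        rw [integral_subtype_comap (measurableSet_singleton _).compl
          fun x => a ‖x‖ * g (NormedSpace.normalize x), restrict_compl_singleton]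
    _ = ∫ p : Metric.sphere (0 : E) 1 × Set.Ioi (0 : ℝ), g p.1 * a p.2
          ∂μ.toSphere.prod (Measure.volumeIoiPow (Module.finrank ℝ E - 1)) := by
        simpa [mul_comm, NormedSpace.normalize] using hpolar
    _ = _ := by
        rw [integral_prod_mul (fun ω : Metric.sphere (0 : E) 1 => g ω)
          (fun r : Set.Ioi (0 : ℝ) => a r), integral_volumeIoiPow]

end Polar

section RadialBump

/-- A smooth bump on `(0, ∞)`, supported away from `0`, used to smear the sphere out radially. -/
def radialBump : ContDiffBump (2 : ℝ) := ⟨1 / 2, 1, by norm_num, by norm_num⟩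

lemma radialBump_eq_zero {t : ℝ} (ht : t ≤ 1) : radialBump t = 0 := by
  refine radialBump.zero_of_le_dist ?_
  rw [Real.dist_eq, abs_sub_comm]
  exact le_trans (by change (1 : ℝ) ≤ 2 - t; linarith) (le_abs_self _)

lemma integral_pow_mul_radialBump_pos (n : ℕ) :
    0 < ∫ r in Set.Ioi (0 : ℝ), r ^ n * radialBump r := by
  have hvanish : ∀ r : ℝ, r ∉ Set.Ioi (0 : ℝ) → r ^ n * radialBump r = 0 := fun r hr => by
    rw [radialBump_eq_zero (by linarith [Set.notMem_Ioi.1 hr]), mul_zero]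
  rw [setIntegral_eq_integral_of_forall_compl_eq_zero hvanish]
  refine Continuous.integral_pos_of_hasCompactSupport_nonneg_nonzero (x := 2)
    ((continuous_pow n).mul radialBump.continuous) radialBump.hasCompactSupport.mul_left
    (fun r => ?_) ?_
  · rcases le_or_gt r 0 with hr | hr
    · exact (hvanish r hr.not_gt).ge
    · exact mul_nonneg (pow_nonneg hr.le n) radialBump.nonneg
  · simp [radialBump.one_of_mem_closedBall (Metric.mem_closedBall_self radialBump.rIn_pos.le)]

end RadialBump

section Sphere

variable {E : Type*} [NormedAddCommGroup E] [InnerProductSpace ℝ E] {U : Set E} {V : E → E} {x : E}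

lemma hasFDerivAt_norm (hx : x ≠ 0) : HasFDerivAt (‖·‖) (‖x‖⁻¹ • innerSL ℝ x) x := by
  have hsqrt := (hasStrictFDerivAt_norm_sq x).hasFDerivAt.sqrt
    (pow_ne_zero 2 (norm_ne_zero_iff.2 hx))
  simp only [Real.sqrt_sq (norm_nonneg _)] at hsqrt
  refine hsqrt.congr_fderiv ?_
  ext v
  simp only [one_div, _root_.mul_inv_rev, _root_.smul_apply, coe_innerSL_apply, nsmul_eq_mul,
    Nat.cast_ofNat, smul_eq_mul]
  field_simp

lemma hasFDerivAt_normalize (hx : x ≠ 0) :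
    HasFDerivAt NormedSpace.normalize
      (‖x‖⁻¹ • ContinuousLinearMap.id ℝ E - (‖x‖⁻¹ ^ 3 • innerSL ℝ x).smulRight x) x := by
  have hinv := (hasDerivAt_inv (norm_ne_zero_iff.2 hx)).comp_hasFDerivAt x (hasFDerivAt_norm hx)
  refine (hinv.fun_smul (hasFDerivAt_id x)).congr_fderiv ?_
  ext v
  simp [sub_eq_add_neg, pow_succ, smul_smul]

lemma inner_normalize_left (x v : E) : ⟪NormedSpace.normalize x, v⟫ = ‖x‖⁻¹ * ⟪x, v⟫ :=
  real_inner_smul_left x v ‖x‖⁻¹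

lemma inner_fderiv_self_eq_zero (hV : DifferentiableAt ℝ V x)
    (htang : ∀ᶠ y in nhds x, ⟪y, V y⟫ = 0) : ⟪x, fderiv ℝ V x x⟫ = 0 := by
  have hzero : (fun y => ⟪y, V y⟫) =ᶠ[nhds x] fun _ => 0 := htang
  have hleibniz := fderiv_inner_apply ℝ differentiableAt_fun_id hV x
  rw [hzero.fderiv_eq] at hleibniz
  simpa [hzero.self_of_nhds, real_inner_comm] using hleibniz.symm

lemma inner_fderiv_normalize_eq_zero (hV : DifferentiableAt ℝ V (NormedSpace.normalize x))
    (htang : ∀ᶠ y in nhds (NormedSpace.normalize x), ⟪y, V y⟫ = 0) :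
    ⟪x, fderiv ℝ V (NormedSpace.normalize x) x⟫ = 0 := by
  have hzero := inner_fderiv_self_eq_zero hV htang
  rw [← NormedSpace.norm_smul_normalize x, map_smul, real_inner_smul_left, real_inner_smul_right,
    NormedSpace.norm_smul_normalize, hzero, mul_zero, mul_zero]

lemma contDiff_norm_smul_comp_normalize {a : ℝ → ℝ} (ha : ContDiff ℝ 1 a)
    (ha_zero : a =ᶠ[nhds 0] 0) (hV : ∀ ω ∈ Metric.sphere (0 : E) 1, ContDiffAt ℝ 1 V ω) :
    ContDiff ℝ 1 fun x => a ‖x‖ • V (NormedSpace.normalize x) := by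
  refine contDiff_iff_contDiffAt.2 fun x => ?_
  rcases eq_or_ne x 0 with rfl | hx
  · have hnorm : Tendsto (fun y : E => ‖y‖) (nhds 0) (nhds 0) := tendsto_norm_zero
    refine (contDiffAt_const (c := (0 : E))).congr_of_eventuallyEq ?_
    filter_upwards [hnorm.eventually ha_zero] with y hy
    simp [hy]
  · have hnorm : ContDiffAt ℝ 1 (fun y : E => ‖y‖) x := contDiffAt_norm ℝ hx
    have hnormalize : ContDiffAt ℝ 1 (NormedSpace.normalize : E → E) x :=
      (hnorm.inv (norm_ne_zero_iff.2 hx)).smul contDiffAt_id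
    have hω : NormedSpace.normalize x ∈ Metric.sphere (0 : E) 1 := by
      simpa using NormedSpace.norm_normalize hx
    exact (ha.contDiffAt.comp x hnorm).smul ((hV _ hω).comp x hnormalize)

/-- The extension of a field from the unit sphere to a compactly supported field, weighted so that
its divergence is the product of a function of `‖x‖` and a function of `x / ‖x‖`. -/
def radialSmear (V : E → E) (x : E) : E :=
  (‖x‖ * radialBump ‖x‖) • V (NormedSpace.normalize x)

lemma contDiff_radialSmear (hV : ∀ ω ∈ Metric.sphere (0 : E) 1, ContDiffAt ℝ 1 V ω) :
    ContDiff ℝ 1 (radialSmear V) := by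
  refine contDiff_norm_smul_comp_normalize (a := fun t => t * radialBump t)
    (contDiff_id.mul radialBump.contDiff) ?_ hV
  filter_upwards [Iio_mem_nhds one_pos] with t ht
  simp [radialBump_eq_zero ht.le]

variable [FiniteDimensional ℝ E]

lemma divergence_comp_normalize (hx : x ≠ 0) (hV : DifferentiableAt ℝ V (NormedSpace.normalize x))
    (htang : ∀ᶠ y in nhds (NormedSpace.normalize x), ⟪y, V y⟫ = 0) :
    divergence (V ∘ NormedSpace.normalize) x =
      ‖x‖⁻¹ * divergence V (NormedSpace.normalize x) := by
  set D := fderiv ℝ V (NormedSpace.normalize x) with hD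
  have hcomp : fderiv ℝ (V ∘ NormedSpace.normalize) x =
      ‖x‖⁻¹ • D - (‖x‖⁻¹ ^ 3 • innerSL ℝ x).smulRight (D x) := by
    rw [(hV.hasFDerivAt.comp x (hasFDerivAt_normalize hx)).fderiv]
    ext v
    simp [hD]
  have htrace : LinearMap.trace ℝ E ((‖x‖⁻¹ ^ 3 • innerSL ℝ x).smulRight (D x)) = 0 := by
    refine (LinearMap.trace_smulRight _ _).trans ?_
    simp [hD, inner_fderiv_normalize_eq_zero hV htang]
  rw [divergence, hcomp, ContinuousLinearMap.toLinearMap_sub, map_sub, htrace, sub_zero,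
    ContinuousLinearMap.toLinearMap_smul, map_smul, smul_eq_mul, divergence]

lemma divergence_norm_smul_comp_normalize {a : ℝ → ℝ} (hx : x ≠ 0)
    (ha : DifferentiableAt ℝ a ‖x‖) (hV : DifferentiableAt ℝ V (NormedSpace.normalize x))
    (htang : ∀ᶠ y in nhds (NormedSpace.normalize x), ⟪y, V y⟫ = 0) :
    divergence (fun y => a ‖y‖ • V (NormedSpace.normalize y)) x =
      a ‖x‖ * ‖x‖⁻¹ * divergence V (NormedSpace.normalize x) := by
  have ha' : HasFDerivAt (fun y : E => a ‖y‖) _ x :=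
    ha.hasDerivAt.comp_hasFDerivAt x (hasFDerivAt_norm hx)
  have hV' : DifferentiableAt ℝ (V ∘ NormedSpace.normalize) x :=
    hV.comp x (hasFDerivAt_normalize hx).differentiableAt
  have hradial : ⟪x, V (NormedSpace.normalize x)⟫ = 0 := by
    simpa [inner_normalize_left, hx] using htang.self_of_nhds
  calc divergence (fun y => a ‖y‖ • (V ∘ NormedSpace.normalize) y) x
      = a ‖x‖ * divergence (V ∘ NormedSpace.normalize) x
          + fderiv ℝ (fun y => a ‖y‖) x (V (NormedSpace.normalize x)) :=
        divergence_smul ha'.differentiableAt hV'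
    _ = a ‖x‖ * ‖x‖⁻¹ * divergence V (NormedSpace.normalize x) := by
        rw [divergence_comp_normalize hx hV htang, ha'.fderiv]
        simp [hradial, mul_assoc]

lemma hasCompactSupport_norm_smul {F : Type*} [NormedAddCommGroup F] [NormedSpace ℝ F]
    {a : ℝ → ℝ} (ha : HasCompactSupport a) (f : E → F) :
    HasCompactSupport fun x => a ‖x‖ • f x := by
  obtain ⟨R, hR⟩ := ha.isCompact.isBounded.subset_closedBall 0
  refine HasCompactSupport.intro (isCompact_closedBall (0 : E) R) fun x hx => ?_
  have hx' : ‖x‖ ∉ tsupport a := fun h => hx (by simpa using hR h)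
  rw [image_eq_zero_of_notMem_tsupport hx', zero_smul]

lemma hasCompactSupport_radialSmear : HasCompactSupport (radialSmear V) :=
  hasCompactSupport_norm_smul (a := fun t => t * radialBump t)
    radialBump.hasCompactSupport.mul_left _

lemma divergence_radialSmear (hx : x ≠ 0)
    (hV : DifferentiableAt ℝ V (NormedSpace.normalize x))
    (htang : ∀ᶠ y in nhds (NormedSpace.normalize x), ⟪y, V y⟫ = 0) :
    divergence (radialSmear V) x =
      radialBump ‖x‖ * divergence V (NormedSpace.normalize x) := by
  have hbump : DifferentiableAt ℝ (fun t => radialBump t) ‖x‖ :=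
    (radialBump.contDiff (n := 1)).differentiable one_ne_zero _
  refine (divergence_norm_smul_comp_normalize (a := fun t => t * radialBump t) hx
    (differentiableAt_fun_id.mul hbump) hV htang).trans ?_
  rw [mul_right_comm ‖x‖, mul_inv_cancel₀ (norm_ne_zero_iff.2 hx), one_mul]

variable [MeasurableSpace E] [BorelSpace E] {μ : Measure E} [μ.IsAddHaarMeasure]

lemma integrable_toSphere_of_continuous {f : Metric.sphere (0 : E) 1 → ℝ} (hf : Continuous f) :
    Integrable f μ.toSphere :=
  hf.integrable_of_hasCompactSupport (.of_compactSpace f)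

lemma integrable_mul_inner_sphere {ν : Measure (Metric.sphere (0 : E) 1)}
    {f : Metric.sphere (0 : E) 1 → ℝ} (hf : Integrable f ν) (e : E) :
    Integrable (fun ω => f ω * ⟪(ω : E), e⟫) ν := by
  refine hf.mul_bdd (c := ‖e‖) (by fun_prop) (.of_forall fun ω => ?_)
  simpa using norm_inner_le_norm (𝕜 := ℝ) (ω : E) e

variable [Nontrivial E]

lemma integral_sphere_divergence_eq_zero (hU : IsOpen U) (hU_sphere : Metric.sphere 0 1 ⊆ U)
    (hV : ContDiffOn ℝ 1 V U) (htang : ∀ y ∈ U, ⟪y, V y⟫ = 0) :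
    ∫ ω : Metric.sphere (0 : E) 1, divergence V ω ∂μ.toSphere = 0 := by
  have hV_sphere : ∀ ω ∈ Metric.sphere (0 : E) 1, ContDiffAt ℝ 1 V ω := fun ω hω =>
    hV.contDiffAt (hU.mem_nhds (hU_sphere hω))
  have hdiv : ∀ x ≠ 0, divergence (radialSmear V) x =
      radialBump ‖x‖ * divergence V (NormedSpace.normalize x) := fun x hx => by
    have hω : NormedSpace.normalize x ∈ Metric.sphere (0 : E) 1 := by
      simpa using NormedSpace.norm_normalize hx
    exact divergence_radialSmear hx ((hV_sphere _ hω).differentiableAt one_ne_zero)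
      (eventually_of_mem (hU.mem_nhds (hU_sphere hω)) htang)
  have hprod := calc
    (∫ ω : Metric.sphere (0 : E) 1, divergence V ω ∂μ.toSphere) *
          ∫ r in Set.Ioi (0 : ℝ), r ^ (Module.finrank ℝ E - 1) * radialBump r
      = ∫ x, radialBump ‖x‖ * divergence V (NormedSpace.normalize x) ∂μ :=
        (integral_norm_mul_normalize μ (fun t => radialBump t) (divergence V)).symm
    _ = ∫ x, divergence (radialSmear V) x ∂μ :=
        integral_congr_ae ((μ.ae_ne 0).mono fun x hx => (hdiv x hx).symm)
    _ = 0 := integral_divergence_eq_zero (contDiff_radialSmear hV_sphere)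
        hasCompactSupport_radialSmear
  exact (mul_eq_zero.1 hprod).resolve_right (integral_pow_mul_radialBump_pos _).ne'

lemma integral_inner_mul_divergence (hU : IsOpen U) (hU_sphere : Metric.sphere 0 1 ⊆ U)
    (hV : ContDiffOn ℝ 1 V U) (htang : ∀ y ∈ U, ⟪y, V y⟫ = 0) (e : E) :
    ∫ ω : Metric.sphere (0 : E) 1, ⟪(ω : E), e⟫ * divergence V ω ∂μ.toSphere =
      -∫ ω : Metric.sphere (0 : E) 1, ⟪V ω, e⟫ ∂μ.toSphere := by
  have hlin : ContDiff ℝ 1 fun y : E => ⟪y, e⟫ := contDiff_id.inner ℝ contDiff_const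
  have hdiv : ∀ ω : Metric.sphere (0 : E) 1, divergence (fun y => ⟪y, e⟫ • V y) (ω : E) =
      ⟪(ω : E), e⟫ * divergence V ω + ⟪V ω, e⟫ := fun ω => by
    rw [divergence_smul (hlin.differentiable one_ne_zero _)
      ((hV.contDiffAt (hU.mem_nhds (hU_sphere ω.2))).differentiableAt one_ne_zero),
      fderiv_inner_apply ℝ differentiableAt_fun_id (differentiableAt_const e)]
    simp
  have hzero : ∫ ω : Metric.sphere (0 : E) 1,
      divergence (fun y => ⟪y, e⟫ • V y) ω ∂μ.toSphere = 0 :=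
    integral_sphere_divergence_eq_zero hU hU_sphere (hlin.contDiffOn.smul hV)
      fun y hy => by rw [real_inner_smul_right, htang y hy, mul_zero]
  have hdiv_int : Integrable (fun ω : Metric.sphere (0 : E) 1 => ⟪(ω : E), e⟫ * divergence V ω)
      μ.toSphere := integrable_toSphere_of_continuous
    (hlin.continuous.continuousOn.mul
      ((continuousOn_divergence hU hV).mono hU_sphere)).domRestrict
  have hV_int : Integrable (fun ω : Metric.sphere (0 : E) 1 => ⟪V ω, e⟫) μ.toSphere :=
    integrable_toSphere_of_continuous
      ((hV.continuousOn.mono hU_sphere).domRestrict.inner continuous_const)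
  simp only [hdiv, integral_add hdiv_int hV_int] at hzero
  exact eq_neg_of_add_eq_zero_left hzero

end Sphere

section TensorFields

variable {T : E3 → Matrix (Fin 3) (Fin 3) ℝ} {U : Set E3} {x : E3}

/-- The row divergence of a matrix field as a vector field, the `P` of `div P`. -/
def rowDivField (T : E3 → Matrix (Fin 3) (Fin 3) ℝ) (x : E3) : E3 := WithLp.toLp 2 (rowDiv T x)

lemma contDiffOn_rowDivField (hU : IsOpen U)
    (hT : ∀ j k, ContDiffOn ℝ 2 (fun y => T y j k) U) : ContDiffOn ℝ 1 (rowDivField T) U :=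
  contDiffOn_euclidean.2 fun k => ContDiffOn.sum (s := Finset.univ) fun j _ =>
    ((hT j k).fderiv_of_isOpen hU (m := 1) (by norm_num)).clm_apply
      (contDiffOn_const (c := EuclideanSpace.single j 1))

lemma divergence_rowDivField (hU : IsOpen U) (hT : ∀ j k, ContDiffOn ℝ 2 (fun y => T y j k) U)
    (hx : x ∈ U) : divergence (rowDivField T) x = divRowDiv T x :=
  divergence_euclidean_eq_sum
    (((contDiffOn_rowDivField hU hT).differentiableOn one_ne_zero).differentiableAt
      (hU.mem_nhds hx))

lemma divergence_mulVec {v : E3 → E3} (hT : ∀ j k, DifferentiableAt ℝ (fun y => T y j k) x)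
    (hv : DifferentiableAt ℝ v x) :
    divergence (fun y => WithLp.toLp 2 (T y *ᵥ v y)) x =
      ⟪rowDivField T x, v x⟫ +
        ∑ j, ∑ k, T x j k * fderiv ℝ v x (EuclideanSpace.single j 1) k := by
  have hv_coord : ∀ k, HasFDerivAt (fun y => v y k) (EuclideanSpace.proj k ∘L fderiv ℝ v x) x :=
    fun k => (EuclideanSpace.proj k : E3 →L[ℝ] ℝ).hasFDerivAt.comp x hv.hasFDerivAt
  have hrow : ∀ j, HasFDerivAt (fun y => (T y *ᵥ v y) j)
      (∑ k, (T x j k • (EuclideanSpace.proj k ∘L fderiv ℝ v x) +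
        v x k • fderiv ℝ (fun y => T y j k) x)) x := fun j =>
    HasFDerivAt.fun_sum (u := Finset.univ) fun k _ => (hT j k).hasFDerivAt.mul (hv_coord k)
  have hdiff : DifferentiableAt ℝ (fun y => WithLp.toLp 2 (T y *ᵥ v y) : E3 → E3) x :=
    differentiableAt_euclidean.2 fun j => (hrow j).differentiableAt
  have hP : ⟪rowDivField T x, v x⟫ =
      ∑ j, ∑ k, v x k * fderiv ℝ (fun y => T y j k) x (EuclideanSpace.single j 1) := by
    rw [Finset.sum_comm]
    simp [rowDivField, rowDiv, PiLp.inner_apply, Finset.mul_sum]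
  rw [divergence_euclidean_eq_sum hdiff, hP, ← Finset.sum_add_distrib]
  refine Finset.sum_congr rfl fun j _ => ?_
  rw [(hrow j).fderiv]
  simp [Finset.sum_add_distrib, add_comm]

lemma divergence_mulVec_const (hT : ∀ j k, DifferentiableAt ℝ (fun y => T y j k) x) (e : E3) :
    divergence (fun y => WithLp.toLp 2 (T y *ᵥ e)) x = ⟪rowDivField T x, e⟫ := by
  simpa using divergence_mulVec hT (differentiableAt_const e)

lemma inner_self_rowDivField (hT : ∀ j k, DifferentiableAt ℝ (fun y => T y j k) x)
    (hT_tang : ∀ᶠ y in nhds x, T y *ᵥ y = 0) :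
    ⟪x, rowDivField T x⟫ = -(T x).trace := by
  have hzero : (fun y => WithLp.toLp 2 (T y *ᵥ y) : E3 → E3) =ᶠ[nhds x] fun _ => 0 :=
    hT_tang.mono fun y hy => by simp [hy]
  have hdiv := divergence_mulVec hT differentiableAt_fun_id
  rw [divergence, hzero.fderiv_eq] at hdiv
  rw [real_inner_comm]
  refine eq_neg_of_add_eq_zero_left ?_
  simpa [Matrix.trace] using hdiv.symm

lemma inner_toLp_mulVec_eq_zero {ι : Type*} [Fintype ι] {M : Matrix ι ι ℝ} (hM : M.IsSymm)
    {y : EuclideanSpace ℝ ι} (hy : M *ᵥ y = 0) (e : EuclideanSpace ℝ ι) :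
    ⟪y, WithLp.toLp 2 (M *ᵥ e)⟫ = 0 := by
  rw [EuclideanSpace.inner_eq_star_dotProduct, star_trivial, dotProduct_comm, dotProduct_mulVec,
    ← mulVec_transpose, hM.eq, hy, zero_dotProduct]

/-- The tensor fields of the theorem: on `U`, `T` is `C²`, symmetric, trace-free and tangential to
the spheres centred at the origin (`T(x)x = 0`). -/
structure IsTangentialTracefreeOn (T : E3 → Matrix (Fin 3) (Fin 3) ℝ) (U : Set E3) : Prop where
  contDiffOn : ∀ j k, ContDiffOn ℝ 2 (fun x => T x j k) U
  isSymm : ∀ x ∈ U, (T x).IsSymm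
  mulVec_self : ∀ x ∈ U, T x *ᵥ x = 0
  trace_eq_zero : ∀ x ∈ U, (T x).trace = 0

namespace IsTangentialTracefreeOn

lemma differentiableAt (hT : IsTangentialTracefreeOn T U) (hU : IsOpen U) (hx : x ∈ U)
    (j k : Fin 3) : DifferentiableAt ℝ (fun y => T y j k) x :=
  ((hT.contDiffOn j k).differentiableOn two_ne_zero).differentiableAt (hU.mem_nhds hx)

lemma inner_rowDivField_eq_zero (hT : IsTangentialTracefreeOn T U) (hU : IsOpen U) (hx : x ∈ U) :
    ⟪x, rowDivField T x⟫ = 0 := by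
  rw [inner_self_rowDivField (hT.differentiableAt hU hx)
    (eventually_of_mem (hU.mem_nhds hx) hT.mulVec_self), hT.trace_eq_zero x hx, neg_zero]

lemma integral_inner_rowDivField_eq_zero (hT : IsTangentialTracefreeOn T U) (hU : IsOpen U)
    (hU_sphere : Metric.sphere 0 1 ⊆ U) (e : E3) :
    ∫ ω : S2, ⟪rowDivField T ω, e⟫ ∂sphereMeasure = 0 := by
  have hTe : ContDiffOn ℝ 1 (fun y => WithLp.toLp 2 (T y *ᵥ e) : E3 → E3) U :=
    contDiffOn_euclidean.2 fun j => ContDiffOn.sum (s := Finset.univ) fun k _ =>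
      ((hT.contDiffOn j k).of_le one_le_two).mul contDiffOn_const
  rw [← integral_sphere_divergence_eq_zero (μ := volume) hU hU_sphere hTe fun y hy =>
    inner_toLp_mulVec_eq_zero (hT.isSymm y hy) (hT.mulVec_self y hy) e]
  exact integral_congr_ae (.of_forall fun ω =>
    (divergence_mulVec_const (hT.differentiableAt hU (hU_sphere ω.2)) e).symm)

lemma integral_divRowDiv_mul_inner_eq_zero (hT : IsTangentialTracefreeOn T U) (hU : IsOpen U)
    (hU_sphere : Metric.sphere 0 1 ⊆ U) (e : E3) :
    ∫ ω : S2, divRowDiv T ω * ⟪(ω : E3), e⟫ ∂sphereMeasure = 0 := calc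
  ∫ ω : S2, divRowDiv T ω * ⟪(ω : E3), e⟫ ∂sphereMeasure
    = ∫ ω : S2, ⟪(ω : E3), e⟫ * divergence (rowDivField T) ω ∂sphereMeasure :=
      integral_congr_ae (.of_forall fun ω => by
        simp only [divergence_rowDivField hU hT.contDiffOn (hU_sphere ω.2), mul_comm])
  _ = -∫ ω : S2, ⟪rowDivField T ω, e⟫ ∂sphereMeasure :=
      integral_inner_mul_divergence hU hU_sphere (contDiffOn_rowDivField hU hT.contDiffOn)
        (fun _ hy => hT.inner_rowDivField_eq_zero hU hy) e
  _ = 0 := by rw [hT.integral_inner_rowDivField_eq_zero hU hU_sphere, neg_zero]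

end IsTangentialTracefreeOn

end TensorFields

section Limit

variable {α ι : Type*} [MeasurableSpace α] {μ : Measure α} {l : Filter ι}

lemma tendsto_integral_mul_of_tendstoUniformly [l.IsCountablyGenerated] {F : ι → α → ℝ}
    {f g : α → ℝ} (hF : TendstoUniformly F f l)
    (hF_meas : ∀ᶠ n in l, AEStronglyMeasurable (F n) μ) (hg : Integrable g μ)
    (hfg : Integrable (fun x => f x * g x) μ) :
    Tendsto (fun n => ∫ x, F n x * g x ∂μ) l (nhds (∫ x, f x * g x ∂μ)) := by
  refine tendsto_integral_filter_of_dominated_convergence (fun x => |f x * g x| + |g x|)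
    (hF_meas.mono fun n hn => hn.mul hg.aestronglyMeasurable) ?_ (hfg.abs.add hg.abs)
    (.of_forall fun x => (hF.tendsto_at x).mul_const (g x))
  filter_upwards [Metric.tendstoUniformly_iff.1 hF 1 one_pos] with n hn
  refine .of_forall fun x => ?_
  have hclose : |F n x - f x| ≤ 1 := by simpa [Real.dist_eq, abs_sub_comm] using (hn x).le
  calc ‖F n x * g x‖ = |f x * g x + (F n x - f x) * g x| := by rw [Real.norm_eq_abs]; ring_nf
    _ ≤ |f x * g x| + |F n x - f x| * |g x| := by rw [← abs_mul]; exact abs_add_le _ _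
    _ ≤ |f x * g x| + |g x| := by
      gcongr
      exact mul_le_of_le_one_left (abs_nonneg _) hclose

lemma tendstoUniformly_pow_mul {Ω : Type*} {Φ : ℝ → Ω → ℝ} {B : Ω → ℝ} {k : ℕ} {C R : ℝ}
    (hΦ : ∀ r ≥ R, ∀ ω, |Φ r ω - r⁻¹ ^ k * B ω| ≤ C / r ^ (k + 1)) :
    TendstoUniformly (fun r ω => r ^ k * Φ r ω) B atTop := by
  have hrate : Tendsto (fun r : ℝ => C / r) atTop (nhds 0) :=
    tendsto_const_nhds.div_atTop tendsto_id
  refine Metric.tendstoUniformly_iff.2 fun ε hε => ?_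
  filter_upwards [eventually_ge_atTop R, eventually_gt_atTop 0, hrate.eventually_lt_const hε]
    with r hR hr hrε ω
  calc dist (B ω) (r ^ k * Φ r ω) = r ^ k * |Φ r ω - r⁻¹ ^ k * B ω| := by
        rw [dist_comm, Real.dist_eq, ← abs_of_pos (pow_pos hr k), ← abs_mul,
          abs_of_pos (pow_pos hr k), mul_sub, ← mul_assoc, ← mul_pow, mul_inv_cancel₀ hr.ne',
          one_pow, one_mul]
    _ ≤ r ^ k * (C / r ^ (k + 1)) := by gcongr; exact hΦ r hR ω
    _ = C / r := by rw [pow_succ]; field_simp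
    _ < ε := hrε

lemma eventually_aestronglyMeasurable_of_continuousOn_Ioi_prod {Ω : Type*} [TopologicalSpace Ω]
    [MeasurableSpace Ω] [OpensMeasurableSpace Ω] {ν : Measure Ω}
    {Φ : ℝ → Ω → ℝ} {a : ℝ}
    (hΦ : ContinuousOn (Function.uncurry Φ) (Set.Ioi a ×ˢ Set.univ)) :
    ∀ᶠ r in atTop, AEStronglyMeasurable (Φ r) ν := by
  filter_upwards [eventually_gt_atTop a] with r hr
  have hr_cont : Continuous fun ω : Ω => (r, ω) := by fun_prop
  exact (hΦ.comp_continuous hr_cont fun _ => ⟨hr, trivial⟩).aestronglyMeasurable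

end Limit

section MomentumLoss

variable {Q : S2 → ℝ} {T S : E3 → Matrix (Fin 3) (Fin 3) ℝ} {U : Set E3}

lemma integrable_divRowDiv (hT : ∀ j k, ContDiffOn ℝ 2 (fun x => T x j k) U) (hU : IsOpen U)
    (hU_sphere : Metric.sphere 0 1 ⊆ U) : Integrable (fun ω : S2 => divRowDiv T ω) sphereMeasure :=
  integrable_toSphere_of_continuous
    (((continuousOn_divergence hU (contDiffOn_rowDivField hU hT)).congr fun _ hx =>
      (divergence_rowDivField hU hT hx).symm).mono hU_sphere).domRestrict

theorem momentum_loss_general (hQ : Integrable Q sphereMeasure) (hU : IsOpen U)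
    (hU_sphere : Metric.sphere 0 1 ⊆ U) (hT : IsTangentialTracefreeOn T U)
    (hS : IsTangentialTracefreeOn S U) {Φ : ℝ → S2 → ℝ}
    (hΦ_meas : ∀ᶠ r in atTop, AEStronglyMeasurable (Φ r) sphereMeasure)
    (hΦ : TendstoUniformly (fun r ω => r ^ 2 * Φ r ω)
      (fun ω => -4 * Q ω + 2 * divRowDiv T ω + divRowDiv S ω) atTop) (e : E3) :
    Tendsto (fun r : ℝ => ∫ ω : S2, r ^ 2 * Φ r ω * ⟪(ω : E3), e⟫ ∂sphereMeasure) atTop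
      (nhds (-4 * ∫ ω : S2, Q ω * ⟪(ω : E3), e⟫ ∂sphereMeasure)) := by
  have hlin : Integrable (fun ω : S2 => ⟪(ω : E3), e⟫) sphereMeasure :=
    integrable_toSphere_of_continuous (by fun_prop)
  have hQ_int := (integrable_mul_inner_sphere hQ e).const_mul (-4)
  have hT_int := (integrable_mul_inner_sphere
    (integrable_divRowDiv hT.contDiffOn hU hU_sphere) e).const_mul 2
  have hS_int := integrable_mul_inner_sphere
    (integrable_divRowDiv hS.contDiffOn hU hU_sphere) e
  have hQT_int : Integrable (fun ω : S2 => -4 * (Q ω * ⟪(ω : E3), e⟫) +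
      2 * (divRowDiv T ω * ⟪(ω : E3), e⟫)) sphereMeasure := hQ_int.add hT_int
  have hsource : (fun ω : S2 =>
      (-4 * Q ω + 2 * divRowDiv T ω + divRowDiv S ω) * ⟪(ω : E3), e⟫) =
      fun ω => -4 * (Q ω * ⟪(ω : E3), e⟫) + 2 * (divRowDiv T ω * ⟪(ω : E3), e⟫) +
        divRowDiv S ω * ⟪(ω : E3), e⟫ := by ext; ring
  have hlimit := tendsto_integral_mul_of_tendstoUniformly hΦ
    (hΦ_meas.mono fun r hr => hr.const_mul (r ^ 2)) hlin (hsource ▸ hQT_int.add hS_int)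
  rwa [hsource, integral_add hQT_int hS_int, integral_add hQ_int hT_int, integral_const_mul,
    integral_const_mul, hT.integral_divRowDiv_mul_inner_eq_zero hU hU_sphere,
    hS.integral_divRowDiv_mul_inner_eq_zero hU hU_sphere, mul_zero, add_zero, add_zero] at hlimit

end MomentumLoss

/-- Linear momentum loss along hyperboloidal evolution (analytic form of Theorem 5.2). -/
theorem momentum_loss
    (Q : S2 → ℝ) (hQ : Continuous Q)
    (T S : E3 → Matrix (Fin 3) (Fin 3) ℝ)
    (hT_smooth : ∀ j k : Fin 3, ContDiffOn ℝ 2 (fun x : E3 => T x j k) {x : E3 | x ≠ 0})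
    (hS_smooth : ∀ j k : Fin 3, ContDiffOn ℝ 2 (fun x : E3 => S x j k) {x : E3 | x ≠ 0})
    (hT_symm : ∀ x : E3, x ≠ 0 → (T x).IsSymm)
    (hS_symm : ∀ x : E3, x ≠ 0 → (S x).IsSymm)
    (hT_hom : ∀ c : ℝ, 0 < c → ∀ x : E3, x ≠ 0 → T (c • x) = T x)
    (hS_hom : ∀ c : ℝ, 0 < c → ∀ x : E3, x ≠ 0 → S (c • x) = S x)
    (hT_tang : ∀ x : E3, x ≠ 0 → (T x) *ᵥ (fun j => x j) = 0)
    (hS_tang : ∀ x : E3, x ≠ 0 → (S x) *ᵥ (fun j => x j) = 0)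
    (hT_tr : ∀ x : E3, x ≠ 0 → (T x).trace = 0)
    (hS_tr : ∀ x : E3, x ≠ 0 → (S x).trace = 0)
    (Φ : ℝ → S2 → ℝ)
    (hΦ_cont : ContinuousOn (Function.uncurry Φ) (Set.Ioi (0 : ℝ) ×ˢ Set.univ))
    (hΦ : ∃ C > (0 : ℝ), ∃ R > (0 : ℝ), ∀ r ≥ R, ∀ ω : S2,
      |Φ r ω - r⁻¹ ^ 2 * (-4 * Q ω + 2 * divRowDiv T (ω : E3) + divRowDiv S (ω : E3))|
        ≤ C / r ^ 3)
    (e : E3) :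
    Tendsto (fun r : ℝ => ∫ ω : S2, r ^ 2 * Φ r ω * ⟪(ω : E3), e⟫ ∂sphereMeasure) atTop
      (nhds (-4 * ∫ ω : S2, Q ω * ⟪(ω : E3), e⟫ ∂sphereMeasure)) := by
  obtain ⟨C, -, R, -, hΦ_rate⟩ := hΦ
  exact momentum_loss_general (integrable_toSphere_of_continuous hQ) isOpen_ne
    (fun ω hω => ne_zero_of_mem_unit_sphere ⟨ω, hω⟩)
    ⟨hT_smooth, hT_symm, hT_tang, hT_tr⟩ ⟨hS_smooth, hS_symm, hS_tang, hS_tr⟩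
    (eventually_aestronglyMeasurable_of_continuousOn_Ioi_prod hΦ_cont)
    (tendstoUniformly_pow_mul hΦ_rate) e
end
end

section
/- Energy of generalized asymptotically hyperboloidal data is independent of the generalized background (coordinate form of Theorem 6.4, energy part). Let H : (0,∞) → ℝ be continuous with 0 < H(r) < 1 for all r > 0 and H(r) = 1 − 1/(2r²) + O(r⁻³) as r → ∞. Let A, U, W : S² → ℝ be continuous and let a, u, w : (0,∞) × S² → ℝ be continuous with, uniformly in ω ∈ S², a(r,ω) = A(ω) r⁻⁵ + O(r⁻⁶), u(r,ω) = U(ω) r⁻¹ + O(r⁻³), w(r,ω) = W(ω) r⁻¹ + O(r⁻³). Then lim_{r→∞} ∫_{S²} r² [ 2 a(r,ω) / ( r (1−H(r)²)² ) + ( (2 − H(r)²) / ( r³ (1−H(r)²) ) + 2 H(r) / ( r² √(1−H(r)²) ) ) u(r,ω) + ( 2 H(r) / ( r² √(1−H(r)²) ) ) w(r,ω) ] dA(ω) = ∫_{S²} ( 2A(ω) + 3U(ω) + 2W(ω) ) dA(ω). In particular the limit is the same for every such H, i.e. independent of the choice of representative in the class 𝓗 of generalized hyperboloidal backgrounds.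 -/
open MeasureTheory Filter Real

noncomputable section

/-!
Only two features of the background enter: `H → 1` and `q = r² (1 - H²) → 1`, both consequences of
`r² (1 - H) → 1/2`. In terms of `q` the charge integrand is a combination of the rescaled data
`r⁵ a`, `r u`, `r w` whose coefficients depend on `r` alone and tend to `2`, `3`, `2`. Being linear
in the data, it can be integrated before passing to the limit, so only the convergence of the
integrals of the rescaled data is needed.
-/

open scoped Topology

/-- The expansion `f(r, x) = F(x) r⁻ᵏ + O(r⁻ᵐ)` as `r → ∞`, uniformly in `x`. -/
def HasUniformExpansion {X : Type*} (f : ℝ → X → ℝ) (F : X → ℝ) (k m : ℕ) : Prop :=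
  ∃ C > (0 : ℝ), ∃ R > (0 : ℝ), ∀ r ≥ R, ∀ x, |f r x - F x / r ^ k| ≤ C / r ^ m

/-- The charge integrand of Theorem 6.4 on the coordinate sphere of radius `r`, including the area
factor `r ^ 2`. Here `h` is the value `H(r)`, and `a`, `u`, `w` are the values of the data at a
point of that sphere. -/
def chargeIntegrand (h r a u w : ℝ) : ℝ :=
  r ^ 2 * (2 * a / (r * (1 - h ^ 2) ^ 2)
    + ((2 - h ^ 2) / (r ^ 3 * (1 - h ^ 2)) + 2 * h / (r ^ 2 * √(1 - h ^ 2))) * u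
    + (2 * h / (r ^ 2 * √(1 - h ^ 2))) * w)

section UniformExpansion

variable {X : Type*} {f : ℝ → X → ℝ} {F : X → ℝ} {k m : ℕ}

lemma HasUniformExpansion.tendstoUniformly (hf : HasUniformExpansion f F k m) (hkm : k < m) :
    TendstoUniformly (fun r x => r ^ k * f r x) F atTop := by
  obtain ⟨C, hC, R, -, hf⟩ := hf
  have hlim : Tendsto (fun r : ℝ => C / r) atTop (𝓝 0) := tendsto_id.const_div_atTop C
  refine Metric.tendstoUniformly_iff.2 fun ε hε => ?_
  filter_upwards [eventually_ge_atTop R, eventually_ge_atTop 1, hlim.eventually_lt_const hε]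
    with r hR h1 hr x
  have : 0 < r := by linarith
  calc dist (F x) (r ^ k * f r x) = |r ^ k * (f r x - F x / r ^ k)| := by
        rw [dist_comm, Real.dist_eq, mul_sub, mul_div_cancel₀ _ (by positivity)]
    _ = r ^ k * |f r x - F x / r ^ k| := by rw [abs_mul, abs_of_pos (by positivity)]
    _ ≤ r ^ k * (C / r ^ (k + 1)) := by
        gcongr
        exact (hf r hR x).trans (by gcongr; exact hkm)
    _ = C / r := by rw [pow_succ]; field_simp
    _ < ε := hr

variable [MeasurableSpace X] {μ : Measure X}

lemma tendsto_integral_of_tendstoUniformly [IsFiniteMeasure μ] {ι E : Type*}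
    [NormedAddCommGroup E] [NormedSpace ℝ E] {l : Filter ι} {g : ι → X → E} {G : X → E}
    (hg : ∀ᶠ i in l, Integrable (g i) μ) (hG : Integrable G μ) (h : TendstoUniformly g G l) :
    Tendsto (fun i => ∫ x, g i x ∂μ) l (𝓝 (∫ x, G x ∂μ)) := by
  refine Metric.tendsto_nhds.2 fun ε hε => ?_
  obtain ⟨δ, hδ, hδε⟩ := exists_pos_mul_lt hε (μ.real Set.univ)
  filter_upwards [hg, Metric.tendstoUniformly_iff.1 h δ hδ] with i hgi hi
  calc dist (∫ x, g i x ∂μ) (∫ x, G x ∂μ) = ‖∫ x, (g i x - G x) ∂μ‖ := by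
        rw [integral_sub hgi hG, dist_eq_norm]
    _ ≤ δ * μ.real Set.univ := by
        refine norm_integral_le_of_norm_le_const (Eventually.of_forall fun x => ?_)
        rw [← dist_eq_norm, dist_comm]
        exact (hi x).le
    _ < ε := by rwa [mul_comm]

lemma HasUniformExpansion.tendsto_pow_mul_integral [IsFiniteMeasure μ]
    (hf : HasUniformExpansion f F k m) (hkm : k < m)
    (hf_int : ∀ᶠ r in atTop, Integrable (f r) μ) (hF_int : Integrable F μ) :
    Tendsto (fun r => r ^ k * ∫ x, f r x ∂μ) atTop (𝓝 (∫ x, F x ∂μ)) := by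
  simp only [← integral_const_mul]
  exact tendsto_integral_of_tendstoUniformly
    (hf_int.mono fun r hr => hr.const_mul (r ^ k)) hF_int (hf.tendstoUniformly hkm)

end UniformExpansion

section CompactSpace

variable {X E : Type*} [TopologicalSpace X] [CompactSpace X] [MeasurableSpace X]
  [OpensMeasurableSpace X] {μ : Measure X} [IsFiniteMeasureOnCompacts μ] [NormedAddCommGroup E]

lemma integrable_of_continuous_of_compactSpace {F : X → E} (hF : Continuous F) : Integrable F μ :=
  hF.integrable_of_hasCompactSupport (HasCompactSupport.of_compactSpace F)

lemma eventually_integrable_of_continuousOn_uncurry {f : ℝ → X → E} {r₀ : ℝ}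
    (hf : ContinuousOn (Function.uncurry f) (Set.Ioi r₀ ×ˢ Set.univ)) :
    ∀ᶠ r in atTop, Integrable (f r) μ := by
  filter_upwards [eventually_gt_atTop r₀] with r hr
  exact integrable_of_continuous_of_compactSpace (continuousOn_univ.1 (hf.uncurry_left r hr))

end CompactSpace

section Background

variable {H : ℝ → ℝ} {c : ℝ}

lemma tendsto_sq_mul_one_sub_of_expansion
    (hH : ∃ C > (0 : ℝ), ∃ R > (0 : ℝ), ∀ r ≥ R, |H r - (1 - 1 / (2 * r ^ 2))| ≤ C / r ^ 3) :
    Tendsto (fun r => r ^ 2 * (1 - H r)) atTop (𝓝 (1 / 2)) := by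
  obtain ⟨C, hC, R, hR, hH⟩ := hH
  have hexp : HasUniformExpansion (fun r (_ : Unit) => 1 - H r) (fun _ => 1 / 2) 2 3 := by
    refine ⟨C, hC, R, hR, fun r hr _ => ?_⟩
    rw [div_div, sub_right_comm, abs_sub_comm]
    exact hH r hr
  exact (hexp.tendstoUniformly (by norm_num)).tendsto_at ()

lemma tendsto_one_of_tendsto_sq_mul_one_sub
    (hH : Tendsto (fun r => r ^ 2 * (1 - H r)) atTop (𝓝 c)) : Tendsto H atTop (𝓝 1) := by
  have hdefect : Tendsto (fun r => 1 - H r) atTop (𝓝 0) := by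
    refine (hH.div_atTop (tendsto_pow_atTop two_ne_zero)).congr' ?_
    filter_upwards [eventually_gt_atTop 0] with r hr
    exact mul_div_cancel_left₀ _ (by positivity)
  simpa using hdefect.const_sub 1

lemma tendsto_sq_mul_one_sub_sq
    (hH : Tendsto (fun r => r ^ 2 * (1 - H r)) atTop (𝓝 c)) :
    Tendsto (fun r => r ^ 2 * (1 - H r ^ 2)) atTop (𝓝 (2 * c)) := by
  have hprod := ((tendsto_one_of_tendsto_sq_mul_one_sub hH).const_add 1).mul hH
  rw [one_add_one_eq_two] at hprod
  exact hprod.congr fun r => by ring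

lemma chargeIntegrand_eq (h a u w : ℝ) {r : ℝ} (hr : 0 < r) :
    chargeIntegrand h r a u w =
      2 / (r ^ 2 * (1 - h ^ 2)) ^ 2 * (r ^ 5 * a)
        + ((2 - h ^ 2) / (r ^ 2 * (1 - h ^ 2)) + 2 * h / √(r ^ 2 * (1 - h ^ 2))) * (r * u)
        + 2 * h / √(r ^ 2 * (1 - h ^ 2)) * (r * w) := by
  have hsqrt : √(r ^ 2 * (1 - h ^ 2)) = r * √(1 - h ^ 2) := by
    rw [Real.sqrt_mul (sq_nonneg r), Real.sqrt_sq hr.le]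
  rw [chargeIntegrand, hsqrt]
  field_simp

lemma tendsto_chargeIntegrand (hH : Tendsto (fun r => r ^ 2 * (1 - H r)) atTop (𝓝 (1 / 2)))
    {a u w : ℝ → ℝ} {A U W : ℝ} (ha : Tendsto (fun r => r ^ 5 * a r) atTop (𝓝 A))
    (hu : Tendsto (fun r => r * u r) atTop (𝓝 U)) (hw : Tendsto (fun r => r * w r) atTop (𝓝 W)) :
    Tendsto (fun r => chargeIntegrand (H r) r (a r) (u r) (w r)) atTop
      (𝓝 (2 * A + 3 * U + 2 * W)) := by
  have hH_one : Tendsto H atTop (𝓝 1) := tendsto_one_of_tendsto_sq_mul_one_sub hH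
  have hq : Tendsto (fun r => r ^ 2 * (1 - H r ^ 2)) atTop (𝓝 1) := by
    simpa using tendsto_sq_mul_one_sub_sq hH
  have hcoeff_a : Tendsto (fun r => 2 / (r ^ 2 * (1 - H r ^ 2)) ^ 2) atTop (𝓝 2) := by
    simpa [Pi.div_def] using tendsto_const_nhds.div (hq.pow 2) (by norm_num)
  have hcoeff_w : Tendsto (fun r => 2 * H r / √(r ^ 2 * (1 - H r ^ 2))) atTop (𝓝 2) := by
    simpa [Pi.div_def] using (hH_one.const_mul 2).div hq.sqrt (by norm_num)
  have hcoeff_u : Tendsto (fun r => (2 - H r ^ 2) / (r ^ 2 * (1 - H r ^ 2))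
      + 2 * H r / √(r ^ 2 * (1 - H r ^ 2))) atTop (𝓝 3) := by
    rw [show (3 : ℝ) = (2 - 1 ^ 2) / 1 + 2 by norm_num]
    exact (((hH_one.pow 2).const_sub 2).div hq one_ne_zero).add hcoeff_w
  refine (((hcoeff_a.mul ha).add (hcoeff_u.mul hu)).add (hcoeff_w.mul hw)).congr' ?_
  filter_upwards [eventually_gt_atTop 0] with r hr
  exact (chargeIntegrand_eq (H r) (a r) (u r) (w r) hr).symm

end Background

section Charge

variable {X : Type*} [MeasurableSpace X] {μ : Measure X}

lemma integral_const_mul_add₃ {a u w : X → ℝ} (ha : Integrable a μ) (hu : Integrable u μ)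
    (hw : Integrable w μ) (c₁ c₂ c₃ : ℝ) :
    ∫ x, (c₁ * a x + c₂ * u x + c₃ * w x) ∂μ =
      c₁ * ∫ x, a x ∂μ + c₂ * ∫ x, u x ∂μ + c₃ * ∫ x, w x ∂μ := by
  rw [integral_add ((ha.const_mul c₁).fun_add (hu.const_mul c₂)) (hw.const_mul c₃),
    integral_add (ha.const_mul c₁) (hu.const_mul c₂)]
  simp only [integral_const_mul]

lemma integral_chargeIntegrand {a u w : X → ℝ} (ha : Integrable a μ) (hu : Integrable u μ)
    (hw : Integrable w μ) (h r : ℝ) :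
    ∫ x, chargeIntegrand h r (a x) (u x) (w x) ∂μ =
      chargeIntegrand h r (∫ x, a x ∂μ) (∫ x, u x ∂μ) (∫ x, w x ∂μ) := by
  simp only [chargeIntegrand, mul_add (r ^ 2), mul_div_right_comm, ← mul_assoc]
  exact integral_const_mul_add₃ ha hu hw _ _ _

theorem generalized_energy_charge_limit_general {H : ℝ → ℝ}
    (hH : Tendsto (fun r => r ^ 2 * (1 - H r)) atTop (𝓝 (1 / 2)))
    {A U W : X → ℝ} (hA : Integrable A μ) (hU : Integrable U μ) (hW : Integrable W μ)
    {a u w : ℝ → X → ℝ} (ha_int : ∀ᶠ r in atTop, Integrable (a r) μ)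
    (hu_int : ∀ᶠ r in atTop, Integrable (u r) μ) (hw_int : ∀ᶠ r in atTop, Integrable (w r) μ)
    (ha : Tendsto (fun r => r ^ 5 * ∫ x, a r x ∂μ) atTop (𝓝 (∫ x, A x ∂μ)))
    (hu : Tendsto (fun r => r * ∫ x, u r x ∂μ) atTop (𝓝 (∫ x, U x ∂μ)))
    (hw : Tendsto (fun r => r * ∫ x, w r x ∂μ) atTop (𝓝 (∫ x, W x ∂μ))) :
    Tendsto (fun r => ∫ x, chargeIntegrand (H r) r (a r x) (u r x) (w r x) ∂μ) atTop
      (𝓝 (∫ x, (2 * A x + 3 * U x + 2 * W x) ∂μ)) := by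
  rw [integral_const_mul_add₃ hA hU hW]
  refine (tendsto_chargeIntegrand hH ha hu hw).congr' ?_
  filter_upwards [ha_int, hu_int, hw_int] with r har hur hwr
  exact (integral_chargeIntegrand har hur hwr (H r) r).symm

end Charge

instance : IsFiniteMeasure sphereMeasure :=
  inferInstanceAs (IsFiniteMeasure (volume : Measure E3).toSphere)

/-- Energy of generalized asymptotically hyperboloidal data is independent of the
generalized background (coordinate form of Theorem 6.4, energy part). -/
theorem generalized_energy_charge_limit
    (H : ℝ → ℝ) (hH_cont : ContinuousOn H (Set.Ioi (0 : ℝ)))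
    (hH_bound : ∀ r > (0 : ℝ), 0 < H r ∧ H r < 1)
    (hH_asymp : ∃ C > (0 : ℝ), ∃ R > (0 : ℝ), ∀ r ≥ R,
      |H r - (1 - 1 / (2 * r ^ 2))| ≤ C / r ^ 3)
    (A U W : S2 → ℝ) (hA : Continuous A) (hU : Continuous U) (hW : Continuous W)
    (a u w : ℝ → S2 → ℝ)
    (ha_cont : ContinuousOn (Function.uncurry a) (Set.Ioi (0 : ℝ) ×ˢ Set.univ))
    (hu_cont : ContinuousOn (Function.uncurry u) (Set.Ioi (0 : ℝ) ×ˢ Set.univ))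
    (hw_cont : ContinuousOn (Function.uncurry w) (Set.Ioi (0 : ℝ) ×ˢ Set.univ))
    (ha : ∃ C > (0 : ℝ), ∃ R > (0 : ℝ), ∀ r ≥ R, ∀ ω : S2,
      |a r ω - A ω / r ^ 5| ≤ C / r ^ 6)
    (hu : ∃ C > (0 : ℝ), ∃ R > (0 : ℝ), ∀ r ≥ R, ∀ ω : S2,
      |u r ω - U ω / r| ≤ C / r ^ 3)
    (hw : ∃ C > (0 : ℝ), ∃ R > (0 : ℝ), ∀ r ≥ R, ∀ ω : S2,
      |w r ω - W ω / r| ≤ C / r ^ 3) :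
    Tendsto
      (fun r : ℝ => ∫ ω : S2,
        r ^ 2 * (2 * a r ω / (r * (1 - H r ^ 2) ^ 2)
          + ((2 - H r ^ 2) / (r ^ 3 * (1 - H r ^ 2))
              + 2 * H r / (r ^ 2 * Real.sqrt (1 - H r ^ 2))) * u r ω
          + (2 * H r / (r ^ 2 * Real.sqrt (1 - H r ^ 2))) * w r ω) ∂sphereMeasure)
      atTop
      (nhds (∫ ω : S2, (2 * A ω + 3 * U ω + 2 * W ω) ∂sphereMeasure)) := by
  have hu_exp : HasUniformExpansion u U 1 3 := by simpa only [HasUniformExpansion, pow_one] using hu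
  have hw_exp : HasUniformExpansion w W 1 3 := by simpa only [HasUniformExpansion, pow_one] using hw
  have ha_int := eventually_integrable_of_continuousOn_uncurry (μ := sphereMeasure) ha_cont
  have hu_int := eventually_integrable_of_continuousOn_uncurry (μ := sphereMeasure) hu_cont
  have hw_int := eventually_integrable_of_continuousOn_uncurry (μ := sphereMeasure) hw_cont
  have hA_int := integrable_of_continuous_of_compactSpace (μ := sphereMeasure) hA
  have hU_int := integrable_of_continuous_of_compactSpace (μ := sphereMeasure) hU
  have hW_int := integrable_of_continuous_of_compactSpace (μ := sphereMeasure) hW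
  have ha_lim := HasUniformExpansion.tendsto_pow_mul_integral ha (by norm_num) ha_int hA_int
  have hu_lim := hu_exp.tendsto_pow_mul_integral (by norm_num) hu_int hU_int
  have hw_lim := hw_exp.tendsto_pow_mul_integral (by norm_num) hw_int hW_int
  simp only [pow_one] at hu_lim hw_lim
  exact generalized_energy_charge_limit_general (tendsto_sq_mul_one_sub_of_expansion hH_asymp)
    hA_int hU_int hW_int ha_int hu_int hw_int ha_lim hu_lim hw_lim
end
end
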